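/- For any GL index structure with contraction ratios λ(i) ∈ (0,1), there exist unique reals s_1, …, s_d satisfying Σ_{i∈I_1} λ(i)^{s_1} = 1 and, for n = 2,…,d, Σ_{i∈I_n} λ(i^{(1)})^{s_1}·Π_{ℓ=2}^n λ(i^{(ℓ)})^{s_ℓ−s_{ℓ−1}} = 1; moreover 0 < s_1 ≤ s_2 ≤ … ≤ s_d. -/

import Mathlib

open Real Finset Filter

noncomputable section

/-- Index sets of a Gatzouras–Lalley structure. -/
def glIdx (Nf : List ℕ → ℕ) : ℕ → Finset (List ℕ)
  | 0 => {[]}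
  | n + 1 => (glIdx Nf n).biUnion fun u =>
      (Finset.range (Nf u)).image fun j => u ++ [j + 1]

/-- Entropy of a vector `p` on index set `I`. -/
def glEnt (I : Finset (List ℕ)) (p : List ℕ → ℝ) : ℝ :=
  -∑ i ∈ I, p i * Real.log (p i)

/-- Lyapunov exponent `χ_ℓ(p)` for `p` on index set `I`. -/
def glLyap (lam : List ℕ → ℝ) (I : Finset (List ℕ)) (ℓ : ℕ) (p : List ℕ → ℝ) : ℝ :=
  -∑ i ∈ I, p i * Real.log (lam (i.take ℓ))

def IsProbVec (I : Finset (List ℕ)) (p : List ℕ → ℝ) : Prop :=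
  (∀ i ∈ I, 0 ≤ p i) ∧ ∑ i ∈ I, p i = 1

/-- `glCaux d χ k = C^{(d)}_{d-k}`, defined by downward recursion. -/
def glCaux (d : ℕ) (chi : ℕ → ℕ → ℝ) : ℕ → ℝ
  | k => (1 - ∑ j ∈ (Finset.range k).attach,
        glCaux d chi j.1 * chi (d - k) (d - j.1)) / chi (d - k) (d - k)
decreasing_by exact Finset.mem_range.mp j.2

/-- The coefficient `C_n^{(d)}(P)`. -/
def glC (d : ℕ) (lam : List ℕ → ℝ) (Nf : List ℕ → ℕ) (P : ℕ → List ℕ → ℝ) (n : ℕ) : ℝ :=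
  glCaux d (fun a m => glLyap lam (glIdx Nf m) a (P m)) (d - n)

/-- Smallest number of sets of diameter at most `δ` needed to cover `Λ`. -/
def coverNum {E : Type*} [EMetricSpace E] (Λ : Set E) (δ : ℝ) : ℕ :=
  sInf {m : ℕ | ∃ U : Fin m → Set E,
    (∀ k, EMetric.diam (U k) ≤ ENNReal.ofReal δ) ∧ Λ ⊆ ⋃ k, U k}

/-- The affine map `S_i` of a Gatzouras–Lalley system. -/
def glMap (d : ℕ) (lam t : List ℕ → ℝ) (i : List ℕ) (x : EuclideanSpace ℝ (Fin d)) :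
    EuclideanSpace ℝ (Fin d) :=
  WithLp.toLp 2 fun k => lam (i.take ((k : ℕ) + 1)) * x k + t (i.take ((k : ℕ) + 1))

def openCube (d : ℕ) : Set (EuclideanSpace ℝ (Fin d)) := {x | ∀ k, x k ∈ Set.Ioo (0:ℝ) 1}

def closedCube (d : ℕ) : Set (EuclideanSpace ℝ (Fin d)) := {x | ∀ k, x k ∈ Set.Icc (0:ℝ) 1}

/-!
Once `s 0, …, s n` are known, the equation of level `n + 1` reads `F (s (n + 1) - s n) = 1` with
`F t = ∑ i, w i * lam i ^ t`, where the weight `w i > 0` depends only on the first `n` letters of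
`i`. As all ratios lie in `(0, 1)`, `F` decreases strictly from `∞` to `0`, so the increment
exists and is unique. Its sign is read off from `F 0`: a word `u` of level `n` has `Nf u ≥ 1`
children, all of weight `w u`, so `F 0 = ∑ u, Nf u * w u` is at least the total weight `1` of
level `n`; at level `0` it equals `Nf [] ≥ 2`, whence the strict inequality `0 < s 1`.
-/

open scoped Topology

section SumMulRpow

variable {ι : Type*} {A : Finset ι} {w a : ι → ℝ}

theorem strictAnti_sum_mul_rpow (hA : A.Nonempty) (hw : ∀ i ∈ A, 0 < w i)
    (ha : ∀ i ∈ A, a i ∈ Set.Ioo (0 : ℝ) 1) :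
    StrictAnti fun t : ℝ => ∑ i ∈ A, w i * a i ^ t := fun _ _ hxy =>
  sum_lt_sum_of_nonempty hA fun i hi =>
    mul_lt_mul_of_pos_left (rpow_lt_rpow_of_exponent_gt (ha i hi).1 (ha i hi).2 hxy) (hw i hi)

theorem continuous_sum_mul_rpow (ha : ∀ i ∈ A, a i ≠ 0) :
    Continuous fun t : ℝ => ∑ i ∈ A, w i * a i ^ t :=
  continuous_finsetSum _ fun i hi => continuous_const.mul (continuous_const_rpow (ha i hi))

theorem tendsto_sum_mul_rpow_atTop (ha : ∀ i ∈ A, a i ∈ Set.Ioo (-1 : ℝ) 1) :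
    Tendsto (fun t : ℝ => ∑ i ∈ A, w i * a i ^ t) atTop (𝓝 0) := by
  simpa using tendsto_finsetSum A fun i hi =>
    (tendsto_rpow_atTop_of_base_lt_one (a i) (ha i hi).1 (ha i hi).2).const_mul (w i)

theorem tendsto_sum_mul_rpow_atBot (hA : A.Nonempty) (hw : ∀ i ∈ A, 0 < w i)
    (ha : ∀ i ∈ A, a i ∈ Set.Ioo (0 : ℝ) 1) :
    Tendsto (fun t : ℝ => ∑ i ∈ A, w i * a i ^ t) atBot atTop := by
  obtain ⟨k, hk⟩ := hA
  have hterm : Tendsto (fun t : ℝ => w k * a k ^ t) atBot atTop :=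
    (tendsto_rpow_atBot_of_base_lt_one (a k) (ha k hk).1 (ha k hk).2).const_mul_atTop (hw k hk)
  refine tendsto_atTop_mono (fun t => ?_) hterm
  exact single_le_sum
    (fun i hi => mul_nonneg (hw i hi).le (rpow_nonneg (ha i hi).1.le t)) hk

theorem existsUnique_sum_mul_rpow_eq (hA : A.Nonempty) (hw : ∀ i ∈ A, 0 < w i)
    (ha : ∀ i ∈ A, a i ∈ Set.Ioo (0 : ℝ) 1) {c : ℝ} (hc : 0 < c) :
    ∃! t : ℝ, ∑ i ∈ A, w i * a i ^ t = c := by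
  have hle : ∃ t : ℝ, ∑ i ∈ A, w i * a i ^ t ≤ c :=
    ((tendsto_sum_mul_rpow_atTop fun i hi =>
      ⟨neg_one_lt_zero.trans (ha i hi).1, (ha i hi).2⟩).eventually_le_const hc).exists
  have hge : ∃ t : ℝ, c ≤ ∑ i ∈ A, w i * a i ^ t :=
    ((tendsto_sum_mul_rpow_atBot hA hw ha).eventually_ge_atTop c).exists
  obtain ⟨t, ht⟩ := mem_range_of_exists_le_of_exists_ge
    (continuous_sum_mul_rpow fun i hi => (ha i hi).1.ne') hle hge
  exact ⟨t, ht, fun _ hu => (strictAnti_sum_mul_rpow hA hw ha).injective (hu.trans ht.symm)⟩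

end SumMulRpow

section Words

variable {Nf : List ℕ → ℕ} {n : ℕ} {i : List ℕ}

theorem mem_glIdx_succ :
    i ∈ glIdx Nf (n + 1) ↔ ∃ u ∈ glIdx Nf n, ∃ j < Nf u, u ++ [j + 1] = i := by
  simp [glIdx]

theorem length_of_mem_glIdx (hi : i ∈ glIdx Nf n) : i.length = n := by
  induction n generalizing i with
  | zero => simpa [glIdx] using hi
  | succ n ih =>
    obtain ⟨u, hu, j, -, rfl⟩ := mem_glIdx_succ.1 hi
    simp [ih hu]

theorem take_mem_glIdx {m : ℕ} (hm : m ≤ n) (hi : i ∈ glIdx Nf n) : i.take m ∈ glIdx Nf m := by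
  induction n, hm using Nat.le_induction generalizing i with
  | base => rwa [List.take_of_length_le (length_of_mem_glIdx hi).le]
  | succ n hmn ih =>
    obtain ⟨u, hu, j, -, rfl⟩ := mem_glIdx_succ.1 hi
    rw [List.take_append_of_le_length (hmn.trans (length_of_mem_glIdx hu).ge)]
    exact ih hu

theorem glIdx_nonempty (hNf : ∀ m < n, ∀ u ∈ glIdx Nf m, 1 ≤ Nf u) : (glIdx Nf n).Nonempty := by
  induction n with
  | zero => simp [glIdx]
  | succ n ih =>
    obtain ⟨u, hu⟩ := ih fun m hm => hNf m (hm.trans n.lt_succ_self)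
    exact ⟨u ++ [0 + 1], mem_glIdx_succ.2 ⟨u, hu, 0, hNf n n.lt_succ_self u hu, rfl⟩⟩

theorem sum_glIdx_succ {M : Type*} [AddCommMonoid M] (f : List ℕ → M) :
    ∑ i ∈ glIdx Nf (n + 1), f i = ∑ u ∈ glIdx Nf n, ∑ j ∈ range (Nf u), f (u ++ [j + 1]) := by
  rw [glIdx, sum_biUnion]
  · exact sum_congr rfl fun u _ => sum_image fun j _ k _ h => by simpa using h
  · intro u _ v _ huv
    refine disjoint_left.2 fun i hu hv => huv ?_
    obtain ⟨j, -, rfl⟩ := mem_image.1 hu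
    obtain ⟨k, -, h⟩ := mem_image.1 hv
    exact (List.append_inj_left' h rfl).symm

end Words

/-- The weight `∏_{ℓ ≤ n} λ(i^{(ℓ)})^{s_ℓ - s_{ℓ-1}}` of the first `n` letters of the word `i`. The
normalization `s 0 = 0` gives the factor `ℓ = 1` its exponent `s_1`. -/
def glWeight (lam : List ℕ → ℝ) (s : ℕ → ℝ) (n : ℕ) (i : List ℕ) : ℝ :=
  ∏ ℓ ∈ Icc 1 n, lam (i.take ℓ) ^ (s ℓ - s (ℓ - 1))

section Weight

variable {lam : List ℕ → ℝ} {s s' : ℕ → ℝ} {n : ℕ} {i : List ℕ}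

theorem glWeight_zero : glWeight lam s 0 i = 1 := by
  simp [glWeight]

theorem glWeight_pos (hlam : ∀ ℓ, 1 ≤ ℓ → ℓ ≤ n → 0 < lam (i.take ℓ)) : 0 < glWeight lam s n i :=
  prod_pos fun ℓ hℓ => rpow_pos_of_pos (hlam ℓ (mem_Icc.1 hℓ).1 (mem_Icc.1 hℓ).2) _

theorem glWeight_congr (h : ∀ m ≤ n, s m = s' m) : glWeight lam s n i = glWeight lam s' n i :=
  prod_congr rfl fun ℓ hℓ => by
    have hℓn := (mem_Icc.1 hℓ).2
    rw [h ℓ hℓn, h (ℓ - 1) ((Nat.sub_le ℓ 1).trans hℓn)]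

theorem glWeight_append {v : List ℕ} (hi : n ≤ i.length) :
    glWeight lam s n (i ++ v) = glWeight lam s n i :=
  prod_congr rfl fun ℓ hℓ => by
    rw [List.take_append_of_le_length ((mem_Icc.1 hℓ).2.trans hi)]

theorem glWeight_succ (hi : i.length ≤ n + 1) :
    glWeight lam s (n + 1) i = glWeight lam s n i * lam i ^ (s (n + 1) - s n) := by
  rw [glWeight, prod_Icc_succ_top (Nat.le_add_left 1 n), List.take_of_length_le hi,
    Nat.add_sub_cancel, glWeight]

end Weight

/-- The left-hand side of the pressure equation of level `n + 1`, as a function of the increment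
`t = s_{n+1} - s_n`; it involves only the values `s 0, …, s n` of `s`. -/
def glPressure (lam : List ℕ → ℝ) (Nf : List ℕ → ℕ) (s : ℕ → ℝ) (n : ℕ) (t : ℝ) : ℝ :=
  ∑ i ∈ glIdx Nf (n + 1), glWeight lam s n i * lam i ^ t

section Pressure

variable {lam : List ℕ → ℝ} {Nf : List ℕ → ℕ} {s s' : ℕ → ℝ} {n : ℕ}

theorem sum_glWeight_succ :
    ∑ i ∈ glIdx Nf (n + 1), glWeight lam s (n + 1) i =
      glPressure lam Nf s n (s (n + 1) - s n) :=
  sum_congr rfl fun _ hi => glWeight_succ (length_of_mem_glIdx hi).le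

theorem glPressure_congr (h : ∀ m ≤ n, s m = s' m) :
    glPressure lam Nf s n = glPressure lam Nf s' n :=
  funext fun _ => sum_congr rfl fun _ _ => by rw [glWeight_congr h]

theorem glPressure_apply_zero :
    glPressure lam Nf s n 0 = ∑ u ∈ glIdx Nf n, Nf u * glWeight lam s n u := by
  simp only [glPressure, rpow_zero, mul_one, sum_glIdx_succ]
  refine sum_congr rfl fun u hu => ?_
  simp only [glWeight_append (length_of_mem_glIdx hu).ge, sum_const, card_range, nsmul_eq_mul]

theorem glWeight_pos_of_mem {m : ℕ} (hnm : n ≤ m)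
    (hlam : ∀ k, 1 ≤ k → k ≤ n → ∀ i ∈ glIdx Nf k, 0 < lam i)
    {i : List ℕ} (hi : i ∈ glIdx Nf m) : 0 < glWeight lam s n i :=
  glWeight_pos fun ℓ h1 hn => hlam ℓ h1 hn _ (take_mem_glIdx (hn.trans hnm) hi)

theorem sum_glWeight_le_glPressure_zero
    (hlam : ∀ k, 1 ≤ k → k ≤ n → ∀ i ∈ glIdx Nf k, 0 < lam i)
    (hNf : ∀ u ∈ glIdx Nf n, 1 ≤ Nf u) :
    ∑ u ∈ glIdx Nf n, glWeight lam s n u ≤ glPressure lam Nf s n 0 := by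
  rw [glPressure_apply_zero]
  exact sum_le_sum fun u hu =>
    le_mul_of_one_le_left (glWeight_pos_of_mem le_rfl hlam hu).le (mod_cast hNf u hu)

theorem strictAnti_glPressure (hne : (glIdx Nf (n + 1)).Nonempty)
    (hlam : ∀ k, 1 ≤ k → k ≤ n + 1 → ∀ i ∈ glIdx Nf k, lam i ∈ Set.Ioo (0 : ℝ) 1) :
    StrictAnti (glPressure lam Nf s n) :=
  strictAnti_sum_mul_rpow hne
    (fun _ => glWeight_pos_of_mem n.le_succ fun k h1 hk i hi =>
      (hlam k h1 (hk.trans n.le_succ) i hi).1)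
    (hlam (n + 1) n.succ_pos le_rfl)

theorem existsUnique_glPressure_eq_one (hne : (glIdx Nf (n + 1)).Nonempty)
    (hlam : ∀ k, 1 ≤ k → k ≤ n + 1 → ∀ i ∈ glIdx Nf k, lam i ∈ Set.Ioo (0 : ℝ) 1) :
    ∃! t, glPressure lam Nf s n t = 1 :=
  existsUnique_sum_mul_rpow_eq hne
    (fun _ => glWeight_pos_of_mem n.le_succ fun k h1 hk i hi =>
      (hlam k h1 (hk.trans n.le_succ) i hi).1)
    (hlam (n + 1) n.succ_pos le_rfl) one_pos

end Pressure

/-- `s` solves the pressure equations of levels `1, …, d`, with the convention `s_0 = 0`. Its values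
beyond `d` are arbitrary. -/
def IsPressureSolution (lam : List ℕ → ℝ) (Nf : List ℕ → ℕ) (d : ℕ) (s : ℕ → ℝ) : Prop :=
  s 0 = 0 ∧ ∀ n, 1 ≤ n → n ≤ d → ∑ i ∈ glIdx Nf n, glWeight lam s n i = 1

section PressureSolution

variable {lam : List ℕ → ℝ} {Nf : List ℕ → ℕ} {d n : ℕ} {s s' : ℕ → ℝ}

theorem isPressureSolution_zero : IsPressureSolution lam Nf 0 s ↔ s 0 = 0 :=
  and_iff_left fun _ h1 h0 => absurd (h1.trans h0) (Nat.not_succ_le_zero 0)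

theorem isPressureSolution_succ :
    IsPressureSolution lam Nf (d + 1) s ↔
      IsPressureSolution lam Nf d s ∧ glPressure lam Nf s d (s (d + 1) - s d) = 1 := by
  rw [← sum_glWeight_succ, IsPressureSolution, IsPressureSolution, and_assoc]
  refine and_congr_right fun _ => ⟨fun h => ⟨fun n h1 hn => h n h1 (hn.trans d.le_succ),
    h (d + 1) d.succ_pos le_rfl⟩, fun h n h1 hn => ?_⟩
  obtain hn | rfl := Nat.le_succ_iff.1 hn
  exacts [h.1 n h1 hn, h.2]

namespace IsPressureSolution

theorem congr (hs : IsPressureSolution lam Nf d s) (h : ∀ m ≤ d, s m = s' m) :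
    IsPressureSolution lam Nf d s' := by
  refine ⟨(h 0 d.zero_le).symm.trans hs.1, fun n h1 hn => ?_⟩
  simp only [← hs.2 n h1 hn, glWeight_congr fun m hm => h m (hm.trans hn)]

theorem sum_glWeight_eq_one (hs : IsPressureSolution lam Nf d s) (hn : n ≤ d) :
    ∑ i ∈ glIdx Nf n, glWeight lam s n i = 1 := by
  obtain rfl | h1 := Nat.eq_zero_or_pos n
  · simp [glIdx, glWeight_zero]
  · exact hs.2 n h1 hn

theorem glPressure_eq_one (hs : IsPressureSolution lam Nf d s) (hn : n < d) :
    glPressure lam Nf s n (s (n + 1) - s n) = 1 :=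
  sum_glWeight_succ.symm.trans (hs.sum_glWeight_eq_one hn)

theorem glIdx_nonempty (hs : IsPressureSolution lam Nf d s) (hn : n ≤ d) : (glIdx Nf n).Nonempty :=
  nonempty_of_sum_ne_zero ((hs.sum_glWeight_eq_one hn).trans_ne one_ne_zero)

end IsPressureSolution

theorem exists_isPressureSolution (hne : (glIdx Nf d).Nonempty)
    (hlam : ∀ n, 1 ≤ n → n ≤ d → ∀ i ∈ glIdx Nf n, lam i ∈ Set.Ioo (0 : ℝ) 1) :
    ∃ s, IsPressureSolution lam Nf d s := by
  induction d with
  | zero => exact ⟨0, isPressureSolution_zero.2 rfl⟩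
  | succ d ih =>
    have hne' : (glIdx Nf d).Nonempty := hne.imp' (List.take d) fun _ => take_mem_glIdx d.le_succ
    obtain ⟨s, hs⟩ := ih hne' fun n h1 hn => hlam n h1 (hn.trans d.le_succ)
    obtain ⟨t, ht, -⟩ := existsUnique_glPressure_eq_one (s := s) hne hlam
    have hagree : ∀ m ≤ d, s m = Function.update s (d + 1) (s d + t) m := fun m hm =>
      (Function.update_of_ne (Nat.lt_succ_of_le hm).ne _ _).symm
    refine ⟨Function.update s (d + 1) (s d + t), isPressureSolution_succ.2 ⟨hs.congr hagree, ?_⟩⟩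
    rwa [← glPressure_congr hagree, Function.update_self, ← hagree d le_rfl, add_sub_cancel_left]

namespace IsPressureSolution

theorem eq_of_le (hs : IsPressureSolution lam Nf d s) (hs' : IsPressureSolution lam Nf d s')
    (hlam : ∀ n, 1 ≤ n → n ≤ d → ∀ i ∈ glIdx Nf n, lam i ∈ Set.Ioo (0 : ℝ) 1) :
    ∀ n ≤ d, s n = s' n := by
  induction d with
  | zero => exact fun n hn => by rw [Nat.le_zero.1 hn, hs.1, hs'.1]
  | succ d ih =>
    have hne : (glIdx Nf (d + 1)).Nonempty := hs.glIdx_nonempty le_rfl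
    rw [isPressureSolution_succ] at hs hs'
    have hagree : ∀ n ≤ d, s n = s' n :=
      ih hs.1 hs'.1 fun n h1 hn => hlam n h1 (hn.trans d.le_succ)
    have hincr : s (d + 1) - s d = s' (d + 1) - s' d :=
      (existsUnique_glPressure_eq_one hne hlam).unique hs.2
        (by rw [glPressure_congr hagree, hs'.2])
    intro n hn
    obtain hn | rfl := Nat.le_succ_iff.1 hn
    · exact hagree n hn
    · linarith [hagree d le_rfl]

theorem le_succ (hs : IsPressureSolution lam Nf d s) (hn : n < d)
    (hNf : ∀ u ∈ glIdx Nf n, 1 ≤ Nf u)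
    (hlam : ∀ k, 1 ≤ k → k ≤ n + 1 → ∀ i ∈ glIdx Nf k, lam i ∈ Set.Ioo (0 : ℝ) 1) :
    s n ≤ s (n + 1) := by
  have hle : glPressure lam Nf s n (s (n + 1) - s n) ≤ glPressure lam Nf s n 0 := by
    rw [hs.glPressure_eq_one hn, ← hs.sum_glWeight_eq_one hn.le]
    exact sum_glWeight_le_glPressure_zero
      (fun k h1 hk i hi => (hlam k h1 (hk.trans n.le_succ) i hi).1) hNf
  exact sub_nonneg.1 ((strictAnti_glPressure (hs.glIdx_nonempty hn) hlam).le_iff_ge.1 hle)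

theorem apply_one_pos (hs : IsPressureSolution lam Nf d s) (hd : 1 ≤ d) (hN : 2 ≤ Nf [])
    (hlam : ∀ i ∈ glIdx Nf 1, lam i ∈ Set.Ioo (0 : ℝ) 1) : 0 < s 1 := by
  have hlt : glPressure lam Nf s 0 (s 1 - s 0) < glPressure lam Nf s 0 0 := by
    rw [hs.glPressure_eq_one hd, glPressure_apply_zero]
    simp only [glIdx, sum_singleton, glWeight_zero, mul_one]
    exact_mod_cast hN
  have hlam' : ∀ k, 1 ≤ k → k ≤ 0 + 1 → ∀ i ∈ glIdx Nf k, lam i ∈ Set.Ioo (0 : ℝ) 1 := by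
    intro k h1 hk
    rwa [le_antisymm hk h1]
  rw [← hs.1]
  exact sub_pos.1 ((strictAnti_glPressure (hs.glIdx_nonempty hd) hlam').lt_iff_gt.1 hlt)

end IsPressureSolution

end PressureSolution

/-- For any GL index structure with ratios in `(0,1)` there exist
unique reals `s_1,…,s_d` solving the pressure equations; moreover
`0 < s_1 ≤ s_2 ≤ … ≤ s_d`. -/
theorem exists_unique_s
    (d : ℕ) (hd : 1 ≤ d)
    (Nf : List ℕ → ℕ) (hN : 2 ≤ Nf [])
    (hNf : ∀ n < d, ∀ u ∈ glIdx Nf n, 1 ≤ Nf u)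
    (lam : List ℕ → ℝ)
    (hlam : ∀ n, 1 ≤ n → n ≤ d → ∀ i ∈ glIdx Nf n, lam i ∈ Set.Ioo (0:ℝ) 1) :
    ∃ s : ℕ → ℝ, s 0 = 0 ∧
      (∀ n, 1 ≤ n → n ≤ d →
        ∑ i ∈ glIdx Nf n, ∏ ℓ ∈ Finset.Icc 1 n, lam (i.take ℓ) ^ (s ℓ - s (ℓ - 1)) = 1) ∧
      0 < s 1 ∧
      (∀ n, 1 ≤ n → n < d → s n ≤ s (n + 1)) ∧
      ∀ s' : ℕ → ℝ, s' 0 = 0 →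
        (∀ n, 1 ≤ n → n ≤ d →
          ∑ i ∈ glIdx Nf n, ∏ ℓ ∈ Finset.Icc 1 n, lam (i.take ℓ) ^ (s' ℓ - s' (ℓ - 1)) = 1) →
        ∀ n, n ≤ d → s' n = s n := by
  obtain ⟨s, hs⟩ := exists_isPressureSolution (glIdx_nonempty hNf) hlam
  refine ⟨s, hs.1, hs.2, hs.apply_one_pos hd hN (hlam 1 le_rfl hd), fun n _ hn => ?_,
    fun s' h0' hs' => IsPressureSolution.eq_of_le ⟨h0', hs'⟩ hs hlam⟩
  exact hs.le_succ hn (hNf n hn) fun k h1 hk => hlam k h1 (hk.trans hn)
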